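/- (Perfect privacy against a corrupted Bob.) For all p, q, s ∈ ZMod 2, the averaged four-qubit density operator (1/4) · Σ_{(m₃,μ) ∈ (ZMod 2)²} v v†, where v = |X; p+m₃⟩ ⊗ |Z; q⟩ ⊗ |Z; s⟩ ⊗ w_s(p·(q+s) + m₃·s + μ) with w₀(c) = |Z; c⟩ and w₁(c) = |Y; c⟩, equals (I₂/2) ⊗ |Z;q⟩⟨Z;q| ⊗ |Z;s⟩⟨Z;s| ⊗ (I₂/2). In particular this average is independent of p. -/

import Mathlib

open Matrix
open scoped BigOperators

noncomputable section

/-- `(-1)^c` as a complex number, for `c : ZMod 2`. -/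
def sgn (c : ZMod 2) : ℂ := if c = 0 then 1 else -1

/-- `|Z;c⟩ = e_c`, the eigenvector of Pauli `Z` with eigenvalue `(−1)^c`. -/
def ketZ (c : ZMod 2) : ZMod 2 → ℂ := fun d => if d = c then 1 else 0

/-- `|X;c⟩ = (e₀ + (−1)^c e₁)/√2`, the eigenvector of Pauli `X` with eigenvalue `(−1)^c`. -/
def ketX (c : ZMod 2) : ZMod 2 → ℂ :=
  fun d => (Real.sqrt 2 : ℂ)⁻¹ * (if d = 0 then 1 else sgn c)

/-- `|Y;c⟩ = (e₀ + (−1)^c·i·e₁)/√2`, the eigenvector of Pauli `Y` with eigenvalue `(−1)^c`. -/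
def ketY (c : ZMod 2) : ZMod 2 → ℂ :=
  fun d => (Real.sqrt 2 : ℂ)⁻¹ * (if d = 0 then 1 else sgn c * Complex.I)

/-- Tensor product of a family of single-qubit vectors. -/
def tensorVec {V : Type*} [Fintype V] (f : V → (ZMod 2 → ℂ)) : (V → ZMod 2) → ℂ :=
  fun x => ∏ i, f i (x i)

/-- Tensor (Kronecker) product of a family of single-qubit operators. -/
def tensorOp {V : Type*} [Fintype V] (f : V → Matrix (ZMod 2) (ZMod 2) ℂ) :
    Matrix (V → ZMod 2) (V → ZMod 2) ℂ :=
  fun x y => ∏ i, f i (x i) (y i)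

/-- The rank-one outer product `|ψ⟩⟨ψ| = v v†`. -/
def outer {α : Type*} (ψ : α → ℂ) : Matrix α α ℂ := fun x y => ψ x * star (ψ y)


theorem zmod2_cases (a : ZMod 2) : a = 0 ∨ a = 1 := by
  revert a; decide

theorem sqrt2_inv_sq : (Real.sqrt 2 : ℂ)⁻¹ * (Real.sqrt 2 : ℂ)⁻¹ = 2⁻¹ := by
  rw [← mul_inv, ← Complex.ofReal_mul, Real.mul_self_sqrt (by norm_num)]
  norm_num

theorem sum_zmod2 (f : ZMod 2 → ℂ) : ∑ t, f t = f 0 + f 1 := Fin.sum_univ_two f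

theorem sum_shift (f : ZMod 2 → ℂ) (a : ZMod 2) : ∑ t, f (a + t) = ∑ t, f t :=
  Equiv.sum_comp (Equiv.addLeft a) f

theorem sum_X (x y : ZMod 2) :
    ∑ c, ketX c x * star (ketX c y) = (1 : Matrix (ZMod 2) (ZMod 2) ℂ) x y := by
  have h := sqrt2_inv_sq
  rw [sum_zmod2]
  rcases zmod2_cases x with rfl | rfl <;> rcases zmod2_cases y with rfl | rfl <;>
    simp [ketX, sgn] <;> linear_combination 2 * h

theorem sum_Y (x y : ZMod 2) :
    ∑ c, ketY c x * star (ketY c y) = (1 : Matrix (ZMod 2) (ZMod 2) ℂ) x y := by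
  have h := sqrt2_inv_sq
  have hI := Complex.I_mul_I
  rw [sum_zmod2]
  rcases zmod2_cases x with rfl | rfl <;> rcases zmod2_cases y with rfl | rfl <;>
    simp [ketY, sgn] <;>
    first
    | linear_combination 2 * h
    | linear_combination 2 * h - 2 * (Real.sqrt 2 : ℂ)⁻¹ * (Real.sqrt 2 : ℂ)⁻¹ * hI

theorem sum_Z (x y : ZMod 2) :
    ∑ c, ketZ c x * star (ketZ c y) = (1 : Matrix (ZMod 2) (ZMod 2) ℂ) x y := by
  rw [sum_zmod2]
  rcases zmod2_cases x with rfl | rfl <;> rcases zmod2_cases y with rfl | rfl <;>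
    simp [ketZ]

theorem sum_W (s x y : ZMod 2) :
    ∑ c, (if s = 0 then ketZ else ketY) c x * star ((if s = 0 then ketZ else ketY) c y)
      = (1 : Matrix (ZMod 2) (ZMod 2) ℂ) x y := by
  split_ifs
  · exact sum_Z x y
  · exact sum_Y x y

/-- Perfect privacy against a corrupted Bob: averaging the pure state
`v = |X; p+m₃⟩ ⊗ |Z; q⟩ ⊗ |Z; s⟩ ⊗ w_s(p·(q+s) + m₃·s + μ)` (with `w₀ = |Z;·⟩`,
`w₁ = |Y;·⟩`) over the uniformly random pads `(m₃, μ)` yields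
`(I₂/2) ⊗ |Z;q⟩⟨Z;q| ⊗ |Z;s⟩⟨Z;s| ⊗ (I₂/2)`; in particular the average is
independent of `p`. -/
theorem bob_privacy (p q s : ZMod 2) :
    (4 : ℂ)⁻¹ • ∑ t : ZMod 2 × ZMod 2,
        outer (tensorVec ![ketX (p + t.1), ketZ q, ketZ s,
          (if s = 0 then ketZ else ketY) (p * (q + s) + t.1 * s + t.2)])
      = tensorOp ![(2 : ℂ)⁻¹ • 1, outer (ketZ q), outer (ketZ s), (2 : ℂ)⁻¹ • 1] := by
  generalize hW : (if s = 0 then ketZ else ketY) = W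
  have hw : ∀ x y, ∑ c, W c x * star (W c y) = (1 : Matrix (ZMod 2) (ZMod 2) ℂ) x y := by
    subst hW; exact sum_W s
  ext x y
  have key : ∀ t : ZMod 2 × ZMod 2,
      outer (tensorVec ![ketX (p + t.1), ketZ q, ketZ s,
          W (p * (q + s) + t.1 * s + t.2)]) x y
      = (outer (ketZ q) (x 1) (y 1) * outer (ketZ s) (x 2) (y 2)) *
        ((ketX (p + t.1) (x 0) * star (ketX (p + t.1) (y 0))) *
        (W (p * (q + s) + t.1 * s + t.2) (x 3) *
          star (W (p * (q + s) + t.1 * s + t.2) (y 3)))) := by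
    intro t
    simp only [outer, tensorVec, Fin.prod_univ_four, star_mul']
    simp only [Matrix.cons_val]
    ring
  rw [Matrix.smul_apply, Matrix.sum_apply, Finset.sum_congr rfl (fun t _ => key t),
    ← Finset.mul_sum, Fintype.sum_prod_type]
  simp only [← Finset.mul_sum]
  simp only [sum_shift (fun c => W c (x 3) * star (W c (y 3))), hw]
  rw [← Finset.sum_mul, sum_shift (fun c => ketX c (x 0) * star (ketX c (y 0))), sum_X]
  simp only [tensorOp, Fin.prod_univ_four, Matrix.cons_val, Matrix.smul_apply, smul_eq_mul]
  ring
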